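/- Fix a real number c with 0 ≤ c < 1. Let ξ∨ be the unique zero of g₁ in I = (ξ_min, ξ_max) and η∨ = (27ξ∨² + 10cξ∨ + 3c² − 40)/(8√(1−c²)). Then ψ(t, ξ∨, η∨) ≤ 0 for all t ∈ [−1,1], and for every pair (ξ, η) with ξ > 0 such that ψ(t, ξ, η) ≤ 0 for all t ∈ [−1,1], sup over t ∈ [−1,1] of |ψ(t, ξ, η)| is at least sup over t ∈ [−1,1] of |ψ(t, ξ∨, η∨)|; i.e., (ξ∨, η∨) induces the optimal inner cubic G⁰ approximant. -/

import Mathlib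

/-- Simplified radial error of the cubic G⁰ Bézier approximant of the unit circular arc. -/
noncomputable def psiC (c t ξ η : ℝ) : ℝ :=
  (1/16) * (t^2 - 1) *
    ((3*η - Real.sqrt (1 - c^2))^2*t^4
      + (16*(1 - c^2) - 9*(η + Real.sqrt (1 - c^2))^2 + 9*(ξ - c)^2)*t^2
      + (16 - (3*ξ + c)^2))

noncomputable def g1 (c ξ : ℝ) : ℝ :=
  2187*ξ^3 + 3807*c*ξ^2 + (1953*c^2 - 3840)*ξ + 245*c^3 - 4352*c

noncomputable def ximin (c : ℝ) : ℝ := (-5*c + 8*Real.sqrt 2*Real.sqrt (9 - c^2))/27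

noncomputable def ximax (c : ℝ) : ℝ := (4 - c)/3

/-- Sup over `t ∈ [−1,1]` of `|f t|`. -/
noncomputable def errSup (f : ℝ → ℝ) : ℝ :=
  sSup ((fun t => |f t|) '' Set.Icc (-1 : ℝ) 1)

theorem errSup_ge (c ξ η t : ℝ) (ht : t ∈ Set.Icc (-1 : ℝ) 1) :
    |psiC c t ξ η| ≤ errSup (fun t => psiC c t ξ η) := by
  have hcont : Continuous (fun t => |psiC c t ξ η|) := by
    unfold psiC; fun_prop
  exact le_csSup (isCompact_Icc.image hcont).bddAbove ⟨t, ht, rfl⟩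

set_option maxHeartbeats 1000000 in
/-- `(ξ∨, η∨)` induces the optimal inner cubic G⁰ approximant. -/
theorem stmt_14 (c : ℝ) (hc0 : 0 ≤ c) (hc1 : c < 1)
    (ξv : ℝ) (hmem : ξv ∈ Set.Ioo (ximin c) (ximax c)) (hg1 : g1 c ξv = 0)
    (ηv : ℝ) (hηv : ηv = (27*ξv^2 + 10*c*ξv + 3*c^2 - 40)/(8*Real.sqrt (1 - c^2))) :
    (∀ t ∈ Set.Icc (-1 : ℝ) 1, psiC c t ξv ηv ≤ 0) ∧
    ∀ ξ η : ℝ, 0 < ξ → (∀ t ∈ Set.Icc (-1 : ℝ) 1, psiC c t ξ η ≤ 0) →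
      errSup (fun t => psiC c t ξv ηv) ≤ errSup (fun t => psiC c t ξ η) := by
  have hs2pos : 0 < 1 - c^2 := by nlinarith
  have hs2 : Real.sqrt (1 - c^2) ^ 2 = 1 - c^2 := Real.sq_sqrt hs2pos.le
  have hspos : 0 < Real.sqrt (1 - c^2) := Real.sqrt_pos.mpr hs2pos
  obtain ⟨hmin, hmax⟩ := hmem
  unfold ximin at hmin
  unfold ximax at hmax
  unfold g1 at hg1
  have hE := errSup_ge c
  unfold psiC at *
  set s := Real.sqrt (1 - c^2) with hsdef
  clear_value s
  -- bounds on ξv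
  have hr2 : (Real.sqrt 2 * Real.sqrt (9 - c^2))^2 = 2 * (9 - c^2) := by
    rw [mul_pow, Real.sq_sqrt (by norm_num), Real.sq_sqrt (by nlinarith)]
  have hr0 : 0 ≤ Real.sqrt 2 * Real.sqrt (9 - c^2) := by positivity
  set r := Real.sqrt 2 * Real.sqrt (9 - c^2) with hr
  have hmin' : 8 * r < 27 * ξv + 5 * c := by
    rw [hr]; linarith
  clear_value r
  have hr4 : 4 ≤ r := by nlinarith
  have hξ1 : c < ξv := by linarith
  have hpos : 0 < 81*ξv^2 + 30*c*ξv + 17*c^2 - 128 := by nlinarith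
  have h8 : 8 * s * ηv = 27*ξv^2 + 10*c*ξv + 3*c^2 - 40 := by
    rw [hηv]; field_simp
  have h24 : 8 * s * (3*ηv - s) = 81*ξv^2 + 30*c*ξv + 17*c^2 - 128 := by
    linear_combination 3 * h8 - 8 * hs2
  have hηpos : 0 < 3*ηv - s := by
    by_contra h
    nlinarith
  have hC : 0 < 16 - (3*ξv + c)^2 := by nlinarith
  have hA : (3*ηv - s)^2 = 16 * (16 - (3*ξv + c)^2) := by
    have : 64 * (1-c^2) * ((3*ηv - s)^2 - 16 * (16 - (3*ξv + c)^2)) = 0 := by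
      have e : 64 * (1-c^2) * (3*ηv - s)^2 = (81*ξv^2 + 30*c*ξv + 17*c^2 - 128)^2 := by
        rw [← h24, ← hs2]; ring
      linear_combination e + 3 * (ξv - c) * hg1
    rcases mul_eq_zero.mp this with h | h
    · nlinarith
    · linarith
  have hB : 16*(1 - c^2) - 9*(ηv + s)^2 + 9*(ξv - c)^2 = -8 * (16 - (3*ξv + c)^2) := by
    linear_combination (-1) * hA - 3 * h8 + 8 * hs2 - 16 * hs2 + 0 * hs2
  rw [hA, hB]
  have hform : ∀ t : ℝ, (1/16) * (t^2 - 1) * (16 * (16 - (3*ξv + c)^2) * t^4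
      + -8 * (16 - (3*ξv + c)^2) * t^2 + (16 - (3*ξv + c)^2))
      = - ((16 - (3*ξv + c)^2)/16 * ((1 - t^2) * (4*t^2 - 1)^2)) := by
    intro t; ring
  simp only [hform]
  have hnn : ∀ t ∈ Set.Icc (-1 : ℝ) 1, 0 ≤ (1 - t^2) * (4*t^2 - 1)^2 := by
    intro t ht
    have : 0 ≤ 1 - t^2 := by
      have := mul_nonneg (sub_nonneg.mpr ht.2) (by linarith [ht.1] : 0 ≤ 1 + t)
      linarith
    positivity
  have hle : ∀ t : ℝ, (1 - t^2) * (4*t^2 - 1)^2 ≤ 1 := by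
    intro t
    have : 1 - (1 - t^2) * (4*t^2 - 1)^2 = t^2 * (4*t^2-3)^2 := by ring
    have : 0 ≤ t^2 * (4*t^2-3)^2 := by positivity
    linarith
  refine ⟨fun t ht => ?_, fun ξ η hξ hin => ?_⟩
  · have := mul_nonneg (by linarith : 0 ≤ (16 - (3*ξv + c)^2)/16) (hnn t ht)
    linarith
  have hup : errSup (fun t => - ((16 - (3*ξv + c)^2)/16 * ((1 - t^2) * (4*t^2 - 1)^2)))
      ≤ (16 - (3*ξv + c)^2)/16 := by
    apply csSup_le
    · exact ⟨_, 0, by norm_num, rfl⟩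
    · rintro _ ⟨t, ht, rfl⟩
      have h1 := mul_nonneg (by linarith : 0 ≤ (16 - (3*ξv + c)^2)/16) (hnn t ht)
      have h2 := mul_le_mul_of_nonneg_left (hle t) (by linarith : 0 ≤ (16 - (3*ξv + c)^2)/16)
      simp only [abs_neg]
      rw [abs_of_nonneg h1]
      linarith
  refine hup.trans ?_
  by_contra! hlt
  have hw2 : (Real.sqrt 3 / 2)^2 = 3/4 := by
    rw [div_pow, Real.sq_sqrt (by norm_num)]; norm_num
  have hw0 : 0 ≤ Real.sqrt 3 / 2 := by positivity
  have hw1 : Real.sqrt 3 / 2 ≤ 1 := by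
    by_contra! h
    have := mul_pos (sub_pos.mpr h) (by linarith : 0 < Real.sqrt 3 / 2 + 1)
    linarith
  set w := Real.sqrt 3 / 2
  clear_value w
  have hw4 : w^4 = 9/16 := by
    have : w^4 = (w^2)^2 := by ring
    rw [this, hw2]; norm_num
  have hd0 := (neg_le_abs _).trans (hE ξ η 0 (by norm_num))
  have hd3 := (neg_le_abs _).trans (hE ξ η w ⟨by linarith, hw1⟩)
  have hd1 := hin (1/2) (by constructor <;> norm_num)
  rw [hw2, hw4] at hd3
  replace hd0 := hd0.trans_lt hlt
  replace hd3 := hd3.trans_lt hlt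
  clear hE hlt hup hin
  have hAlt : (3*η - s)^2 < (3*ηv - s)^2 := by
    rw [hA]; linarith
  have hab := abs_lt_of_sq_lt_sq hAlt hηpos.le
  obtain ⟨ha1, ha2⟩ := abs_lt.mp hab
  have hC0 : 16 - (3*ξ + c)^2 < 16 - (3*ξv + c)^2 := by linarith
  have hξlt : ξv < ξ := by
    have := lt_of_pow_lt_pow_left₀ 2 (by linarith) (by linarith : (3*ξv + c)^2 < (3*ξ + c)^2)
    linarith
  have hX : 0 < (ξ - ξv) * (ξ + ξv - 2*c) := mul_pos (by linarith) (by linarith)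
  have hY : 0 < (ηv - η) * s := mul_pos (by linarith) hspos
  -- second value is at least the first
  linarith [hA, hB]
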